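/- Let λ_z > 0, L₁, d₁, d_b ≥ 0, μ ∈ (0,1]. Let g : ℝⁿ × ℝᵐ × ℝ → ℝᵐ and h : ℝⁿ → ℝᵐ differentiable with g(a, h(a), 0) = 0 for all a; assume ⟨g(a,z₁,ν) − g(a,z₂,ν), z₁ − z₂⟩ ≤ −λ_z‖z₁ − z₂‖² for all a, ν, z₁, z₂, and ‖g(a,w,μ) − g(a,w,0)‖ ≤ L₁μ for all a, w. Let x : [0,∞) → ℝⁿ be differentiable with ‖Dh(x(t))(x′(t))‖ ≤ d₁ for all t ≥ 0, let δ : [0,∞) → ℝᵐ satisfy ‖δ(t)‖ ≤ d_b for all t, and let z_p : [0,∞) → ℝᵐ solve the disturbed fast dynamics μ z_p′(t) = g(x(t), z_p(t), μ) + μ δ(t). Then for all t ≥ 0, ‖z_p(t) − h(x(t))‖ ≤ e^{−(λ_z/μ) t}‖z_p(0) − h(x(0))‖ + (μ (d₁ + L₁ + d_b)/λ_z)(1 − e^{−(λ_z/μ) t}). -/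

import Mathlib

/-!
With `e = zp - h ∘ x`, contraction at parameter `mu` between `zp` and `h (x t)`, together with
`g (x t) (h (x t)) 0 = 0` and the Lipschitz bound in the parameter, gives the differential inequality
`⟪e', e⟫ ≤ -(lamz / mu) ‖e‖² + (d₁ + L₁ + db) ‖e‖`.
Formally this is `‖e‖' ≤ -(lamz / mu) ‖e‖ + (d₁ + L₁ + db)`, whose Grönwall bound is the claim.
Since the norm is not differentiable at `0`, `norm_le_of_inner_deriv_le` compares `‖e‖²` with the
square of a strictly positive, strictly larger solution of the scalar equation and lets the
enlargement tend to `0`.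
-/

open scoped RealInnerProductSpace

/-- Grönwall inequality for the norm, under a one-sided (inner product) bound on the derivative
with a decay rate `k > 0` and a forcing term `D`. -/
lemma norm_le_of_inner_deriv_le {E : Type*} [NormedAddCommGroup E] [InnerProductSpace ℝ E]
    {k D : ℝ} (hk : 0 < k) (hD : 0 ≤ D) {e e' : ℝ → E}
    (he : ∀ t ≥ (0 : ℝ), HasDerivAt e (e' t) t)
    (hin : ∀ t ≥ (0 : ℝ), ⟪e' t, e t⟫ ≤ -k * ‖e t‖ ^ 2 + D * ‖e t‖) {t : ℝ} (ht : 0 ≤ t) :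
    ‖e t‖ ≤ Real.exp (-k * t) * ‖e 0‖ + D / k * (1 - Real.exp (-k * t)) := by
  have hexp : ∀ s ≥ (0 : ℝ), Real.exp (-k * s) ≤ 1 := fun s hs => by
    rw [Real.exp_le_one_iff]
    nlinarith
  have key : ∀ ε > 0, ‖e t‖ ≤
      Real.exp (-k * t) * (‖e 0‖ + ε) + (D + ε) / k * (1 - Real.exp (-k * t)) := by
    intro ε hε
    set B : ℝ → ℝ := fun s =>
      Real.exp (-k * s) * (‖e 0‖ + ε) + (D + ε) / k * (1 - Real.exp (-k * s)) with hBdef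
    have hBpos : ∀ s ≥ (0 : ℝ), 0 < B s := fun s hs => by
      have h1 : 0 ≤ 1 - Real.exp (-k * s) := sub_nonneg.2 (hexp s hs)
      have h2 : 0 < ‖e 0‖ + ε := by positivity
      simp only [hBdef]
      positivity
    have hB : ∀ s, HasDerivAt B (-k * B s + (D + ε)) s := fun s => by
      have h1 : HasDerivAt (fun s : ℝ => Real.exp (-k * s)) (Real.exp (-k * s) * (-k * 1)) s :=
        ((hasDerivAt_id s).const_mul (-k)).exp
      have h2 := (h1.mul_const (‖e 0‖ + ε)).add ((h1.const_sub 1).const_mul ((D + ε) / k))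
      refine h2.congr_deriv ?_
      simp only [hBdef]
      field_simp
      ring
    have hB2 : ∀ s, HasDerivAt (fun s => B s ^ 2) (2 * B s * (-k * B s + (D + ε))) s := fun s => by
      refine ((hB s).pow 2).congr_deriv ?_
      norm_num
    have hsq : ‖e t‖ ^ 2 ≤ B t ^ 2 := by
      refine image_le_of_deriv_right_lt_deriv_boundary (f := fun s => ‖e s‖ ^ 2)
        (f' := fun s => 2 * ⟪e s, e' s⟫) (a := 0) (b := t) ?_ ?_ ?_ hB2 ?_ ⟨ht, le_rfl⟩
      · exact fun s hs => ((he s hs.1).norm_sq).continuousAt.continuousWithinAt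
      · exact fun s hs => (he s hs.1).norm_sq.hasDerivWithinAt
      · simp only [hBdef, mul_zero, Real.exp_zero, one_mul, sub_self, add_zero]
        gcongr
        linarith
      · intro s hs heq
        have hpos := hBpos s hs.1
        have hn : ‖e s‖ = B s := (sq_eq_sq₀ (norm_nonneg _) hpos.le).1 heq
        have h1 := hin s hs.1
        rw [hn, real_inner_comm] at h1
        nlinarith [mul_pos hpos hε]
    exact (sq_le_sq₀ (norm_nonneg _) (hBpos t ht).le).1 hsq
  -- The bound in `key` is affine in `ε`, with slope `C`.
  set C := Real.exp (-k * t) + 1 / k * (1 - Real.exp (-k * t)) with hC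
  have hCpos : 0 < C := by
    have h1 : 0 ≤ 1 - Real.exp (-k * t) := sub_nonneg.2 (hexp t ht)
    positivity
  refine le_of_forall_pos_le_add fun η hη => (key (η / C) (by positivity)).trans_eq ?_
  have h1 : η / C * C = η := div_mul_cancel₀ η hCpos.ne'
  conv_rhs => rw [← h1]
  generalize η / C = ε
  rw [hC]
  ring

/-- Robustness of the fast-variable bound (Section 4.2, equation (22), `χ_z = 1`):
an additional bounded matched disturbance of size `d_b` enlarges the ultimate bound
of the fast tracking error to `μ(d₁ + L₁ + d_b)/λ_z`. -/
theorem stmt_10 {n m : ℕ} (lamz L₁ d₁ db mu : ℝ)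
    (hlamz : 0 < lamz) (hL₁ : 0 ≤ L₁) (hd₁ : 0 ≤ d₁) (hdb : 0 ≤ db)
    (hmu0 : 0 < mu) (hmu1 : mu ≤ 1)
    (g : EuclideanSpace ℝ (Fin n) → EuclideanSpace ℝ (Fin m) → ℝ → EuclideanSpace ℝ (Fin m))
    (h : EuclideanSpace ℝ (Fin n) → EuclideanSpace ℝ (Fin m))
    (hdiff : Differentiable ℝ h)
    (hroot : ∀ a, g a (h a) 0 = 0)
    (hcontr : ∀ (a : EuclideanSpace ℝ (Fin n)) (ν : ℝ) (z₁ z₂ : EuclideanSpace ℝ (Fin m)),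
      ⟪g a z₁ ν - g a z₂ ν, z₁ - z₂⟫ ≤ -lamz * ‖z₁ - z₂‖ ^ 2)
    (hLip : ∀ (a : EuclideanSpace ℝ (Fin n)) (w : EuclideanSpace ℝ (Fin m)),
      ‖g a w mu - g a w 0‖ ≤ L₁ * mu)
    (x x' : ℝ → EuclideanSpace ℝ (Fin n))
    (hx : ∀ t ≥ (0:ℝ), HasDerivAt x (x' t) t)
    (hdrift : ∀ t ≥ (0:ℝ), ‖fderiv ℝ h (x t) (x' t)‖ ≤ d₁)
    (δ : ℝ → EuclideanSpace ℝ (Fin m)) (hδ : ∀ t ≥ (0:ℝ), ‖δ t‖ ≤ db)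
    (zp zp' : ℝ → EuclideanSpace ℝ (Fin m))
    (hzp : ∀ t ≥ (0:ℝ), HasDerivAt zp (zp' t) t)
    (hzpeq : ∀ t ≥ (0:ℝ), mu • zp' t = g (x t) (zp t) mu + mu • δ t) :
    ∀ t ≥ (0:ℝ), ‖zp t - h (x t)‖ ≤
      Real.exp (-(lamz / mu) * t) * ‖zp 0 - h (x 0)‖ +
        mu * (d₁ + L₁ + db) / lamz * (1 - Real.exp (-(lamz / mu) * t)) := by
  intro t ht
  have hD : 0 ≤ d₁ + L₁ + db := by positivity
  have he : ∀ s ≥ (0 : ℝ), HasDerivAt (fun s => zp s - h (x s))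
      (zp' s - fderiv ℝ h (x s) (x' s)) s := fun s hs =>
    (hzp s hs).sub ((hdiff (x s)).hasFDerivAt.comp_hasDerivAt s (hx s hs))
  have hin : ∀ s ≥ (0 : ℝ), ⟪zp' s - fderiv ℝ h (x s) (x' s), zp s - h (x s)⟫ ≤
      -(lamz / mu) * ‖zp s - h (x s)‖ ^ 2 + (d₁ + L₁ + db) * ‖zp s - h (x s)‖ := by
    intro s hs
    set v := zp s - h (x s) with hv
    have hc := hcontr (x s) mu (zp s) (h (x s))
    rw [← hv] at hc
    have hl : ⟪g (x s) (h (x s)) mu, v⟫ ≤ L₁ * mu * ‖v‖ := by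
      have h1 := hLip (x s) (h (x s))
      rw [hroot, sub_zero] at h1
      exact (real_inner_le_norm _ _).trans (by gcongr)
    have hδv : ⟪δ s, v⟫ ≤ db * ‖v‖ :=
      (real_inner_le_norm _ _).trans (by gcongr; exact hδ s hs)
    have hdr : -⟪fderiv ℝ h (x s) (x' s), v⟫ ≤ d₁ * ‖v‖ := by
      rw [← inner_neg_left]
      refine (real_inner_le_norm _ _).trans ?_
      rw [norm_neg]
      gcongr
      exact hdrift s hs
    have heq : mu * ⟪zp' s, v⟫ = ⟪g (x s) (zp s) mu, v⟫ + mu * ⟪δ s, v⟫ := by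
      rw [← real_inner_smul_left, hzpeq s hs, inner_add_left, real_inner_smul_left]
    rw [inner_sub_left] at hc ⊢
    refine le_of_mul_le_mul_left ?_ hmu0
    have hr : mu * (-(lamz / mu) * ‖v‖ ^ 2 + (d₁ + L₁ + db) * ‖v‖) =
        -lamz * ‖v‖ ^ 2 + mu * ((d₁ + L₁ + db) * ‖v‖) := by
      field_simp
    rw [hr]
    nlinarith [mul_le_mul_of_nonneg_left hδv hmu0.le, mul_le_mul_of_nonneg_left hdr hmu0.le]
  have hfin := norm_le_of_inner_deriv_le (div_pos hlamz hmu0) hD he hin ht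
  have hconst : (d₁ + L₁ + db) / (lamz / mu) = mu * (d₁ + L₁ + db) / lamz := by
    field_simp
  rwa [hconst] at hfin
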